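/- Let k ≥ 2 be an even integer and N a positive multiple of k. Let C_m denote the single-column SU(N) Young diagram with m boxes. Then: (i) |C_{k/2}| = k/2 and |C_{N−k/2}| = N − k/2 are both congruent to k/2 modulo k; (ii) in the normalization C₂(R) = ∑_{i=1}^{N−1} R_i(R_i − 2i + N), the two diagrams have equal quadratic Casimir, C₂(C_{k/2}) = C₂(C_{N−k/2}) = (k/2)(N − k/2); (iii) the charge conjugate of C_{k/2} is C_{N−k/2}; and (iv) if k < N then C_{k/2} ≠ C_{N−k/2}. Hence for k < N the orbifold SU(N)/Z_k theory with discrete θ-angle κ = k/2 has two distinct degenerate vacua exchanged by charge conjugation. -/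

import Mathlib

/-- The charge conjugate of an `SU(N)` Young diagram `R` (indexed by `1,…,N`):
`R̄ j = R 1 - R (N + 1 - j)`. -/
def conjYD (N : ℕ) (R : ℕ → ℕ) : ℕ → ℕ := fun j => R 1 - R (N + 1 - j)

/-- The single-column `SU(N)` Young diagram with `m` boxes:
`C_m(i) = 1` for `i ≤ m` and `0` otherwise. -/
def col (m : ℕ) : ℕ → ℕ := fun i => if i ≤ m then 1 else 0

theorem sum_col_aux (m M : ℕ) : ∑ i ∈ Finset.Icc 1 M, col m i = min M m := by
  induction M with
  | zero => simp
  | succ n ih =>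
    rw [Finset.sum_Icc_succ_top (by omega), ih]
    unfold col
    split_ifs <;> omega

theorem sum_casimir_aux (N m M : ℕ) (h : m ≤ M) : ∑ i ∈ Finset.Icc 1 M,
    (col m i : ℤ) * ((col m i : ℤ) - 2 * (i : ℤ) + (N : ℤ)) = (m : ℤ) * ((N : ℤ) - (m : ℤ)) := by
  induction M, h using Nat.le_induction with
  | base =>
    have key : ∀ n, n ≤ m → ∑ i ∈ Finset.Icc 1 n,
        (col m i : ℤ) * ((col m i : ℤ) - 2 * (i : ℤ) + (N : ℤ))
          = (n : ℤ) * ((N : ℤ) - (n : ℤ)) := by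
      intro n
      induction n with
      | zero => simp
      | succ n ih =>
        intro hn
        rw [Finset.sum_Icc_succ_top (by omega), ih (by omega)]
        have : col m (n + 1) = 1 := if_pos hn
        rw [this]
        push_cast
        ring
    exact key m le_rfl
  | succ n hn ih =>
    rw [Finset.sum_Icc_succ_top (by omega), ih]
    have : col m (n + 1) = 0 := if_neg (by omega)
    rw [this]
    simp

/-- In the orbifold `SU(N)/ℤ_k` theory with discrete θ-angle `κ = k/2` (for `k`
even, `N` a positive multiple of `k`): the single-column diagrams with `k/2` and
`N − k/2` boxes both survive (sizes `≡ k/2 (mod k)`), have equal quadratic Casimir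
`(k/2)(N − k/2)`, are exchanged by charge conjugation, and are distinct when
`k < N` — two degenerate vacua exchanged by charge conjugation. -/
theorem degenerate_vacua_charge_conjugation
    (k N : ℕ) (hk : 2 ≤ k) (hke : 2 ∣ k) (hN : 0 < N) (hkN : k ∣ N) :
    ((∑ i ∈ Finset.Icc 1 N, col (k / 2) i = k / 2) ∧
      (∑ i ∈ Finset.Icc 1 N, col (N - k / 2) i = N - k / 2) ∧
      k / 2 ≡ k / 2 [MOD k] ∧ (N - k / 2) ≡ k / 2 [MOD k]) ∧
    ((∑ i ∈ Finset.Icc 1 (N - 1),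
          (col (k / 2) i : ℤ) * ((col (k / 2) i : ℤ) - 2 * (i : ℤ) + (N : ℤ))
        = ((k / 2 : ℕ) : ℤ) * ((N : ℤ) - ((k / 2 : ℕ) : ℤ))) ∧
      (∑ i ∈ Finset.Icc 1 (N - 1),
          (col (N - k / 2) i : ℤ) * ((col (N - k / 2) i : ℤ) - 2 * (i : ℤ) + (N : ℤ))
        = ((k / 2 : ℕ) : ℤ) * ((N : ℤ) - ((k / 2 : ℕ) : ℤ)))) ∧
    (∀ j, 1 ≤ j → j ≤ N → conjYD N (col (k / 2)) j = col (N - k / 2) j) ∧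
    (k < N → col (k / 2) ≠ col (N - k / 2)) := by
  have hle : k ≤ N := Nat.le_of_dvd hN hkN
  refine ⟨⟨?_, ?_, rfl, ?_⟩, ⟨?_, ?_⟩, ?_, ?_⟩
  · rw [sum_col_aux]; omega
  · rw [sum_col_aux]; omega
  · have h : N - k / 2 = k / 2 + (N - k) := by omega
    rw [h]
    have h2 : k ∣ N - k := Nat.dvd_sub hkN dvd_rfl
    simpa using (Nat.ModEq.refl (k / 2)).add (Nat.modEq_zero_iff_dvd.mpr h2)
  · exact sum_casimir_aux N _ _ (by omega)
  · rw [sum_casimir_aux N _ _ (by omega), Nat.cast_sub (by omega)]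
    ring
  · intro j h1 h2
    unfold conjYD col
    split_ifs <;> omega
  · intro hlt h
    have h1 := congrFun h (N - k / 2)
    unfold col at h1
    split_ifs at h1 <;> omega
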